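/- Suppose the covariate density g is bounded, bounded away from zero on [0,1], and its restriction to [0,1] is continuous, and the kernel w is a symmetric density with compact support [−1,1] and positive on a set of positive measure near 0 (as guaranteed by Assumption W). Let c_n → 0. For x ∈ [0,1] let Q̄_n(x) be the (d+1)×(d+1) matrix with (k,m)-entry ∫ g(x + c_n t) t^{k+m} w(t) dt. Then there exists η > 0 such that for all n and all x ∈ [0,1], all eigenvalues of Q̄_n(x) lie in the interval [η, (d+1)‖g‖_∞]; in particular Q̄_n(x) is invertible and sup_{0≤x≤1} ‖Q̄_n(x)^{−1}‖ ≤ 1/η. -/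

import Mathlib

open MeasureTheory Filter

/-- `q̄_{nm}(x) = ∫ g(x + c t) t^m w(t) dt`. -/
noncomputable def qbar (g w : ℝ → ℝ) (c : ℝ) (m : ℕ) (x : ℝ) : ℝ :=
  ∫ t, g (x + c * t) * t ^ m * w t

/-- The matrix `Q̄_n(x)` with `(k,m)`-entry `q̄_{n,k+m}(x)`. -/
noncomputable def Qbar (g w : ℝ → ℝ) (c : ℝ) (d : ℕ) (x : ℝ) :
    Matrix (Fin (d + 1)) (Fin (d + 1)) ℝ :=
  Matrix.of fun k m : Fin (d + 1) => qbar g w c ((k : ℕ) + (m : ℕ)) x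

/-- The ℓ²→ℓ² operator norm of a real square matrix. -/
noncomputable def opNorm {k : ℕ} (M : Matrix (Fin k) (Fin k) ℝ) : ℝ :=
  ⨆ v : {v : Fin k → ℝ // ∑ i, v i ^ 2 ≤ 1}, Real.sqrt (∑ i, (M.mulVec v i) ^ 2)

/-! Let `ν` be the measure with density `g(x + c t) w(t)`. The matrix `Q̄(x)` is the moment
matrix `(∫ t^(k+m) dν)` of `ν`, so `vᵀ Q̄(x) v = ∫ p² dν` for the polynomial `p` with coefficients
`v`, and moment matrices are monotone in the measure.

Whatever the position of `x` in `[0, 1]`, as soon as `|c| δ ≤ 1/2` one of the two windows `[0, δ]`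
and `[-δ, 0]` is mapped into `[0, 1]` by `t ↦ x + c t`. There `g ≥ c₀`, so `ν` dominates `c₀` times
the restriction of `w(t) dt` to that window. The moment matrices of these two fixed measures are
positive definite, because a nonzero polynomial has only finitely many roots; their least
eigenvalues give `η`. The upper bound is Cauchy–Schwarz for `p(t)²` on `[-1, 1]`. -/

section LoewnerOrder

open Matrix
open scoped ComplexOrder MatrixOrder

variable {n 𝕜 : Type*} [RCLike 𝕜]

lemma le_of_forall_dotProduct_mulVec_le [Fintype n] {A B : Matrix n n 𝕜} (hA : A.IsHermitian)
    (hB : B.IsHermitian) (h : ∀ v, star v ⬝ᵥ A *ᵥ v ≤ star v ⬝ᵥ B *ᵥ v) : A ≤ B :=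
  .of_dotProduct_mulVec_nonneg (hB.sub hA) fun v ↦ by
    simpa [sub_mulVec, dotProduct_sub] using h v

variable [DecidableEq n] {A : Matrix n n 𝕜} {η b : ℝ}

lemma smul_one_le_smul_one (h : η ≤ b) : η • (1 : Matrix n n 𝕜) ≤ b • (1 : Matrix n n 𝕜) := by
  rw [Matrix.le_iff, ← sub_smul]
  exact PosSemidef.one.smul (sub_nonneg.2 h)

lemma posDef_of_smul_one_le (hη : 0 < η) (h : η • (1 : Matrix n n 𝕜) ≤ A) : A.PosDef := by
  simpa using (PosDef.one.smul hη).add_posSemidef h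

lemma exists_pos_smul_one_le_of_posDef [Finite n] [Nonempty n] (hA : A.PosDef) :
    ∃ η > (0 : ℝ), η • (1 : Matrix n n 𝕜) ≤ A := by
  have := Fintype.ofFinite n
  simp_rw [← Algebra.algebraMap_eq_smul_one]
  exact (CFC.exists_pos_algebraMap_le_iff hA.isHermitian.isSelfAdjoint).2 fun _ ↦
    hA.isStrictlyPositive.spectrum_pos

variable [Fintype n]

lemma spectrum_subset_Icc_of_le_of_le (hA : A.IsHermitian) (hη : η • (1 : Matrix n n 𝕜) ≤ A)
    (hb : A ≤ b • (1 : Matrix n n 𝕜)) : spectrum ℝ A ⊆ Set.Icc η b := by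
  rw [← Algebra.algebraMap_eq_smul_one] at hη hb
  exact fun μ hμ ↦ ⟨(algebraMap_le_iff_le_spectrum hA.isSelfAdjoint).1 hη μ hμ,
    (le_algebraMap_iff_spectrum_le hA.isSelfAdjoint).1 hb μ hμ⟩

lemma sq_mul_dotProduct_self_le {A : Matrix n n ℝ} (hη : 0 ≤ η)
    (h : η • (1 : Matrix n n ℝ) ≤ A) (v : n → ℝ) :
    η ^ 2 * (v ⬝ᵥ v) ≤ A *ᵥ v ⬝ᵥ A *ᵥ v := by
  have hform : η * (v ⬝ᵥ v) ≤ v ⬝ᵥ A *ᵥ v := by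
    simpa [sub_mulVec, smul_mulVec] using PosSemidef.dotProduct_mulVec_nonneg h v
  have hsq : 0 ≤ (A *ᵥ v - η • v) ⬝ᵥ (A *ᵥ v - η • v) := dotProduct_self_star_nonneg _
  simp only [sub_dotProduct, dotProduct_sub, smul_dotProduct, dotProduct_smul, smul_eq_mul,
    dotProduct_comm (A *ᵥ v) v] at hsq
  linarith [mul_le_mul_of_nonneg_left hform hη]

lemma opNorm_inv_le_of_smul_one_le {k : ℕ} {M : Matrix (Fin k) (Fin k) ℝ} (hη : 0 < η)
    (h : η • (1 : Matrix (Fin k) (Fin k) ℝ) ≤ M) : opNorm M⁻¹ ≤ 1 / η := by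
  have : Nonempty {v : Fin k → ℝ // ∑ i, v i ^ 2 ≤ 1} := ⟨0, by simp⟩
  refine ciSup_le fun ⟨v, hv⟩ ↦ Real.sqrt_le_iff.2 ⟨by positivity, ?_⟩
  have hdet : IsUnit M.det := (posDef_of_smul_one_le hη h).det_pos.ne'.isUnit
  have hinv : η ^ 2 * (M⁻¹ *ᵥ v ⬝ᵥ M⁻¹ *ᵥ v) ≤ v ⬝ᵥ v := by
    simpa [mul_nonsing_inv M hdet] using sq_mul_dotProduct_self_le hη.le h (M⁻¹ *ᵥ v)
  simp only [dotProduct, ← sq] at hinv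
  rw [div_pow, one_pow, le_div_iff₀' (by positivity)]
  exact hinv.trans hv

end LoewnerOrder

section MomentMatrix

open Matrix Polynomial
open scoped MatrixOrder

/-- The Hankel matrix of the moments `∫ t^(i+j) dμ` of a measure on the line, for `i, j < k`. It is
meaningful when these moments are finite; a divergent moment is recorded as `0`. -/
noncomputable def momentMatrix (μ : Measure ℝ) (k : ℕ) : Matrix (Fin k) (Fin k) ℝ :=
  of fun i j ↦ ∫ t, t ^ ((i : ℕ) + (j : ℕ)) ∂μ

lemma momentMatrix_isHermitian (μ : Measure ℝ) (k : ℕ) : (momentMatrix μ k).IsHermitian := by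
  ext i j
  simp [momentMatrix, add_comm]

variable {μ ν : Measure ℝ} {k : ℕ}

lemma eval_ofFn (v : Fin k → ℝ) (t : ℝ) : (ofFn k v).eval t = ∑ i, v i * t ^ (i : ℕ) := by
  simp [ofFn_eq_sum_monomial, eval_finsetSum]

lemma integrable_eval (hμ : ∀ m : ℕ, Integrable (fun t ↦ t ^ m) μ) (p : ℝ[X]) :
    Integrable (fun t ↦ p.eval t) μ := by
  simp_rw [eval_eq_sum_range]
  exact integrable_finsetSum _ fun m _ ↦ (hμ m).const_mul _

lemma integrable_eval_sq (hμ : ∀ m : ℕ, Integrable (fun t ↦ t ^ m) μ) (p : ℝ[X]) :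
    Integrable (fun t ↦ p.eval t ^ 2) μ := by
  simp_rw [← eval_pow]
  exact integrable_eval hμ (p ^ 2)

lemma dotProduct_momentMatrix_mulVec (hμ : ∀ m : ℕ, Integrable (fun t ↦ t ^ m) μ)
    (v : Fin k → ℝ) : v ⬝ᵥ momentMatrix μ k *ᵥ v = ∫ t, (ofFn k v).eval t ^ 2 ∂μ := by
  have hexpand (t : ℝ) :
      (ofFn k v).eval t ^ 2 = ∑ i, ∑ j, v i * v j * t ^ ((i : ℕ) + (j : ℕ)) := by
    simp only [eval_ofFn, sq, Finset.sum_mul_sum, pow_add, mul_mul_mul_comm]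
  simp_rw [hexpand]
  rw [integral_finsetSum _ fun i _ ↦ integrable_finsetSum _ fun j _ ↦ (hμ _).const_mul _]
  refine Finset.sum_congr rfl fun i _ ↦ ?_
  rw [integral_finsetSum _ fun j _ ↦ (hμ _).const_mul _, mulVec, dotProduct, Finset.mul_sum]
  refine Finset.sum_congr rfl fun j _ ↦ ?_
  rw [integral_const_mul, momentMatrix, of_apply]
  ring

lemma momentMatrix_mono (hν : ∀ m : ℕ, Integrable (fun t ↦ t ^ m) ν) (h : μ ≤ ν) :
    momentMatrix μ k ≤ momentMatrix ν k := by
  refine le_of_forall_dotProduct_mulVec_le (momentMatrix_isHermitian μ k)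
    (momentMatrix_isHermitian ν k) fun v ↦ ?_
  rw [star_trivial, dotProduct_momentMatrix_mulVec fun m ↦ (hν m).mono_measure h,
    dotProduct_momentMatrix_mulVec hν]
  exact integral_mono_measure h (.of_forall fun _ ↦ sq_nonneg _) (integrable_eval_sq hν _)

lemma ae_eval_ne_zero [NullSingletonClass μ] {p : ℝ[X]} (hp : p ≠ 0) :
    ∀ᵐ t ∂μ, p.eval t ≠ 0 := by
  simpa [ae_iff] using (finite_setOfPred_isRoot hp).measure_zero μ

lemma momentMatrix_posDef [NullSingletonClass μ] [NeZero μ]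
    (hμ : ∀ m : ℕ, Integrable (fun t ↦ t ^ m) μ) : (momentMatrix μ k).PosDef := by
  refine .of_dotProduct_mulVec_pos (momentMatrix_isHermitian μ k) fun v hv ↦ ?_
  rw [star_trivial, dotProduct_momentMatrix_mulVec hμ]
  have hp : ofFn k v ≠ 0 := (map_ne_zero_iff _ (injective_ofFn k)).2 hv
  refine (integral_nonneg fun _ ↦ sq_nonneg _).lt_of_ne' fun hzero ↦ ?_
  have hae : ∀ᵐ t ∂μ, (ofFn k v).eval t ^ 2 = 0 :=
    (integral_eq_zero_iff_of_nonneg (fun _ ↦ sq_nonneg _) (integrable_eval_sq hμ _)).1 hzero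
  obtain ⟨t, ht, ht'⟩ := ((ae_eval_ne_zero hp).and hae).exists
  exact ht (pow_eq_zero_iff two_ne_zero |>.1 ht')

lemma integrable_pow_of_ae_abs_le_one [IsFiniteMeasure μ] (h : ∀ᵐ t ∂μ, |t| ≤ 1) (m : ℕ) :
    Integrable (fun t ↦ t ^ m) μ := by
  refine .of_bound (by fun_prop) 1 ?_
  filter_upwards [h] with t ht
  simpa using pow_le_one₀ (abs_nonneg t) ht

lemma eval_ofFn_sq_le (v : Fin k → ℝ) {t : ℝ} (ht : |t| ≤ 1) :
    (ofFn k v).eval t ^ 2 ≤ k * (v ⬝ᵥ v) := by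
  have hpow (i : ℕ) : (t ^ i) ^ 2 ≤ 1 := by
    rw [sq_le_one_iff_abs_le_one, abs_pow]
    exact pow_le_one₀ (abs_nonneg t) ht
  calc (ofFn k v).eval t ^ 2
      ≤ (∑ i, v i ^ 2) * ∑ i : Fin k, (t ^ (i : ℕ)) ^ 2 := by
        rw [eval_ofFn]
        exact Finset.sum_mul_sq_le_sq_mul_sq _ _ _
    _ ≤ (∑ i, v i ^ 2) * ∑ _i : Fin k, 1 := by
        gcongr
        exact hpow _
    _ = k * (v ⬝ᵥ v) := by simp [dotProduct, sq, mul_comm]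

lemma momentMatrix_le_smul_one [IsFiniteMeasure μ] (h : ∀ᵐ t ∂μ, |t| ≤ 1) :
    momentMatrix μ k ≤ (k * μ.real Set.univ) • (1 : Matrix (Fin k) (Fin k) ℝ) := by
  have hμ := integrable_pow_of_ae_abs_le_one h
  refine le_of_forall_dotProduct_mulVec_le (momentMatrix_isHermitian μ k)
    (isHermitian_one.smul (.all _)) fun v ↦ ?_
  rw [star_trivial]
  calc v ⬝ᵥ momentMatrix μ k *ᵥ v
      = ∫ t, (ofFn k v).eval t ^ 2 ∂μ := dotProduct_momentMatrix_mulVec hμ v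
    _ ≤ ∫ _, k * (v ⬝ᵥ v) ∂μ :=
        integral_mono_ae (integrable_eval_sq hμ _) (integrable_const _)
          (h.mono fun _ ↦ eval_ofFn_sq_le v)
    _ = v ⬝ᵥ ((k * μ.real Set.univ) • (1 : Matrix (Fin k) (Fin k) ℝ)) *ᵥ v := by
        rw [integral_const, smul_mulVec, one_mulVec, dotProduct_smul, smul_eq_mul, smul_eq_mul]
        ring

end MomentMatrix

section WithDensity

open scoped ENNReal

variable {α : Type*} [MeasurableSpace α] {μ : Measure α} {f : α → ℝ≥0∞} {b : ℝ≥0∞} {S : Set α}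

lemma smul_restrict_le_withDensity (hS : MeasurableSet S) (h : ∀ t ∈ S, b ≤ f t) :
    b • μ.restrict S ≤ μ.withDensity f := by
  rw [← withDensity_const, ← withDensity_indicator hS]
  exact withDensity_mono (.of_forall fun _ ↦ Set.indicator_le h _)

lemma withDensity_univ_le (h : ∀ t, f t ≤ b) : μ.withDensity f Set.univ ≤ b * μ Set.univ := by
  simpa using lintegral_mono (μ := μ) h

end WithDensity

section LocalDesign

open scoped ENNReal MatrixOrder

/-- The measure `w(t) dt` of a kernel `w ≥ 0`. -/
noncomputable def kernelMeasure (w : ℝ → ℝ) : Measure ℝ :=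
  volume.withDensity fun t ↦ ENNReal.ofReal (w t)

/-- The measure `g(x + a t) w(t) dt`: the design density `g` seen from `x` at bandwidth `a`,
weighted by the kernel `w`. Its moments are the entries of `Q̄(x)`. -/
noncomputable def localDesignMeasure (g w : ℝ → ℝ) (a x : ℝ) : Measure ℝ :=
  (kernelMeasure w).withDensity fun t ↦ ENNReal.ofReal (g (x + a * t))

instance (w : ℝ → ℝ) : NullSingletonClass (kernelMeasure w) := by
  unfold kernelMeasure
  infer_instance

variable {g w : ℝ → ℝ} {a b x : ℝ}

lemma aemeasurable_comp_add_mul (hg : AEMeasurable g) (x a : ℝ) :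
    AEMeasurable fun t ↦ g (x + a * t) := by
  rcases eq_or_ne a 0 with rfl | ha
  · simp
  · exact hg.comp_quasiMeasurePreserving <| (quasiMeasurePreserving_add_left volume x).comp
      (Measure.quasiMeasurePreserving_smul volume ha)

lemma isProbabilityMeasure_kernelMeasure (hw0 : ∀ t, 0 ≤ w t) (hw : Integrable w)
    (hw1 : ∫ t, w t = 1) : IsProbabilityMeasure (kernelMeasure w) :=
  ⟨by simp [kernelMeasure, ← ofReal_integral_eq_lintegral_ofReal hw (.of_forall hw0), hw1]⟩

lemma ae_abs_le_one_kernelMeasure (hw : AEMeasurable w)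
    (hsupp : Function.support w ⊆ Set.Icc (-1) 1) : ∀ᵐ t ∂kernelMeasure w, |t| ≤ 1 := by
  refine (ae_withDensity_iff' hw.ennreal_ofReal).2 (.of_forall fun t ht ↦ ?_)
  exact abs_le.2 (hsupp fun hwt ↦ ht (by simp [hwt]))

lemma kernelMeasure_restrict_ne_zero {S : Set ℝ} (hw : AEMeasurable w)
    (h : 0 < volume {t | t ∈ S ∧ 0 < w t}) : (kernelMeasure w).restrict S ≠ 0 := by
  rw [Ne, Measure.restrict_eq_zero, kernelMeasure, withDensity_apply_eq_zero' hw.ennreal_ofReal]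
  convert h.ne' using 3
  ext t
  simp [and_comm]

lemma ae_abs_le_one_localDesignMeasure (hw : AEMeasurable w)
    (hsupp : Function.support w ⊆ Set.Icc (-1) 1) :
    ∀ᵐ t ∂localDesignMeasure g w a x, |t| ≤ 1 :=
  (withDensity_absolutelyContinuous _ _).ae_le (ae_abs_le_one_kernelMeasure hw hsupp)

lemma localDesignMeasure_univ_le [IsProbabilityMeasure (kernelMeasure w)]
    (hgb : ∀ y, g y ≤ b) : localDesignMeasure g w a x Set.univ ≤ ENNReal.ofReal b := by
  simpa [localDesignMeasure] using withDensity_univ_le (μ := kernelMeasure w)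
    fun t ↦ ENNReal.ofReal_le_ofReal (hgb (x + a * t))

lemma isFiniteMeasure_localDesignMeasure [IsProbabilityMeasure (kernelMeasure w)]
    (hgb : ∀ y, g y ≤ b) : IsFiniteMeasure (localDesignMeasure g w a x) :=
  ⟨(localDesignMeasure_univ_le hgb).trans_lt ENNReal.ofReal_lt_top⟩

lemma Qbar_eq_momentMatrix (hg : AEMeasurable g) (hg0 : ∀ y, 0 ≤ g y) (hw : AEMeasurable w)
    (hw0 : ∀ t, 0 ≤ w t) (a : ℝ) (d : ℕ) (x : ℝ) :
    Qbar g w a d x = momentMatrix (localDesignMeasure g w a x) (d + 1) := by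
  have hgw : AEMeasurable (fun t ↦ ENNReal.ofReal (g (x + a * t))) (kernelMeasure w) :=
    (aemeasurable_comp_add_mul hg x a).ennreal_ofReal.mono_ac (withDensity_absolutelyContinuous _ _)
  ext i j
  rw [momentMatrix, Matrix.of_apply, localDesignMeasure,
    integral_withDensity_eq_integral_toReal_smul₀ hgw (by simp), kernelMeasure,
    integral_withDensity_eq_integral_toReal_smul₀ hw.ennreal_ofReal (by simp)]
  simp only [Qbar, qbar, Matrix.of_apply, smul_eq_mul, ENNReal.toReal_ofReal, hg0, hw0]
  exact integral_congr_ae (.of_forall fun t ↦ by ring)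

lemma Qbar_isHermitian (g w : ℝ → ℝ) (a : ℝ) (d : ℕ) (x : ℝ) : (Qbar g w a d x).IsHermitian := by
  ext i j
  simp [Qbar, add_comm]

lemma Qbar_le_smul_one (hg : AEMeasurable g) (hg0 : ∀ y, 0 ≤ g y) (hgb : ∀ y, g y ≤ b)
    (hw0 : ∀ t, 0 ≤ w t) (hw : Integrable w) (hw1 : ∫ t, w t = 1)
    (hsupp : Function.support w ⊆ Set.Icc (-1) 1) (a : ℝ) (d : ℕ) (x : ℝ) :
    Qbar g w a d x ≤ (((d : ℝ) + 1) * b) • 1 := by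
  have := isProbabilityMeasure_kernelMeasure hw0 hw hw1
  have := isFiniteMeasure_localDesignMeasure (a := a) (x := x) (w := w) hgb
  rw [Qbar_eq_momentMatrix hg hg0 hw.aemeasurable hw0]
  refine (momentMatrix_le_smul_one
    (ae_abs_le_one_localDesignMeasure hw.aemeasurable hsupp)).trans (smul_one_le_smul_one ?_)
  push_cast
  gcongr
  exact ENNReal.toReal_le_of_le_ofReal ((hg0 0).trans (hgb 0)) (localDesignMeasure_univ_le hgb)

lemma exists_pos_smul_one_le_Qbar_of_forall_mem_le {S : Set ℝ} {c₀ : ℝ} (hg : AEMeasurable g)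
    (hg0 : ∀ y, 0 ≤ g y) (hgb : ∀ y, g y ≤ b) (hw0 : ∀ t, 0 ≤ w t) (hw : Integrable w)
    (hw1 : ∫ t, w t = 1) (hsupp : Function.support w ⊆ Set.Icc (-1) 1) (d : ℕ)
    (hS : MeasurableSet S) (hwS : 0 < volume {t | t ∈ S ∧ 0 < w t}) (hc₀ : 0 < c₀) :
    ∃ η > (0 : ℝ), ∀ a x, (∀ t ∈ S, c₀ ≤ g (x + a * t)) → η • 1 ≤ Qbar g w a d x := by
  have := isProbabilityMeasure_kernelMeasure hw0 hw hw1
  let σ := ENNReal.ofReal c₀ • (kernelMeasure w).restrict S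
  have : NeZero σ := ⟨mt Measure.ennreal_smul_eq_zero.1 <| not_or.2
    ⟨(ENNReal.ofReal_pos.2 hc₀).ne', kernelMeasure_restrict_ne_zero hw.aemeasurable hwS⟩⟩
  have : NullSingletonClass σ := ⟨fun t ↦ by simp [σ]⟩
  have hσ (m : ℕ) : Integrable (fun t ↦ t ^ m) σ :=
    (integrable_pow_of_ae_abs_le_one (ae_abs_le_one_kernelMeasure hw.aemeasurable hsupp)
      m).restrict.smul_measure ENNReal.ofReal_ne_top
  obtain ⟨η, hη, hle⟩ := exists_pos_smul_one_le_of_posDef (momentMatrix_posDef (k := d + 1) hσ)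
  refine ⟨η, hη, fun a x hgS ↦ ?_⟩
  have := isFiniteMeasure_localDesignMeasure (a := a) (x := x) (w := w) hgb
  rw [Qbar_eq_momentMatrix hg hg0 hw.aemeasurable hw0]
  refine hle.trans (momentMatrix_mono (integrable_pow_of_ae_abs_le_one
    (ae_abs_le_one_localDesignMeasure hw.aemeasurable hsupp)) ?_)
  exact smul_restrict_le_withDensity hS fun t ht ↦ ENNReal.ofReal_le_ofReal (hgS t ht)

end LocalDesign

section Windows

variable {w : ℝ → ℝ} {a x δ : ℝ}

lemma forall_add_mul_mem_Icc_or (hx : x ∈ Set.Icc (0 : ℝ) 1) (ha : |a| * δ ≤ 1 / 2) :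
    (∀ t ∈ Set.Icc 0 δ, x + a * t ∈ Set.Icc (0 : ℝ) 1) ∨
      ∀ t ∈ Set.Icc (-δ) 0, x + a * t ∈ Set.Icc (0 : ℝ) 1 := by
  obtain ⟨hx0, hx1⟩ := hx
  have hbound {t : ℝ} (ht : |t| ≤ δ) : -(1 / 2) ≤ a * t ∧ a * t ≤ 1 / 2 := by
    rw [← abs_le, abs_mul]
    exact (mul_le_mul_of_nonneg_left ht (abs_nonneg a)).trans ha
  have hright {t : ℝ} (ht : t ∈ Set.Icc 0 δ) := hbound (abs_le.2 ⟨by linarith [ht.1, ht.2], ht.2⟩)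
  have hleft {t : ℝ} (ht : t ∈ Set.Icc (-δ) 0) := hbound (abs_le.2 ⟨ht.1, by linarith [ht.1, ht.2]⟩)
  rcases le_total 0 a with ha0 | ha0 <;> rcases le_total x (1 / 2) with hx2 | hx2
  · exact .inl fun t ht ↦ ⟨by linarith [mul_nonneg ha0 ht.1], by linarith [hright ht]⟩
  · exact .inr fun t ht ↦
      ⟨by linarith [hleft ht], by linarith [mul_nonpos_of_nonneg_of_nonpos ha0 ht.2]⟩
  · exact .inr fun t ht ↦
      ⟨by linarith [mul_nonneg_of_nonpos_of_nonpos ha0 ht.2], by linarith [hleft ht]⟩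
  · exact .inl fun t ht ↦
      ⟨by linarith [hright ht], by linarith [mul_nonpos_of_nonpos_of_nonneg ha0 ht.1]⟩

lemma volume_left_window_eq (hw : Function.Even w) (δ : ℝ) :
    volume {t | t ∈ Set.Icc (-δ) 0 ∧ 0 < w t} = volume {t | t ∈ Set.Icc 0 δ ∧ 0 < w t} := by
  rw [← Measure.measure_preimage_neg]
  congr 1
  ext t
  simp [hw t, and_comm]

lemma volume_right_window_pos (hw : Function.Even w)
    (hpos : 0 < volume {t | |t| < δ ∧ 0 < w t}) :
    0 < volume {t | t ∈ Set.Icc 0 δ ∧ 0 < w t} := by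
  refine pos_iff_ne_zero.2 fun hzero ↦ hpos.ne' <| measure_mono_null ?_ <|
    measure_union_null hzero ((volume_left_window_eq hw δ).trans hzero)
  rintro t ⟨ht, hwt⟩
  obtain ⟨hlt, hgt⟩ := abs_lt.1 ht
  exact (le_total 0 t).imp (fun h ↦ ⟨⟨h, hgt.le⟩, hwt⟩) (fun h ↦ ⟨⟨hlt.le, h⟩, hwt⟩)

end Windows

section Eigenvalues

open scoped MatrixOrder

lemma exists_pos_smul_one_le_Qbar {g w : ℝ → ℝ} {b c₀ : ℝ} (hg : AEMeasurable g)
    (hg0 : ∀ y, 0 ≤ g y) (hgb : ∀ y, g y ≤ b) (hc₀ : 0 < c₀)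
    (hlow : ∀ y ∈ Set.Icc (0 : ℝ) 1, c₀ ≤ g y) (hw0 : ∀ t, 0 ≤ w t) (hw : Integrable w)
    (hw1 : ∫ t, w t = 1) (hsupp : Function.support w ⊆ Set.Icc (-1) 1)
    (hright : ∀ δ > (0 : ℝ), 0 < volume {t | t ∈ Set.Icc 0 δ ∧ 0 < w t})
    (hleft : ∀ δ > (0 : ℝ), 0 < volume {t | t ∈ Set.Icc (-δ) 0 ∧ 0 < w t}) (d : ℕ) (K : ℝ) :
    ∃ η > (0 : ℝ), ∀ a, |a| ≤ K → ∀ x ∈ Set.Icc (0 : ℝ) 1, η • 1 ≤ Qbar g w a d x := by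
  obtain ⟨δ, hδ, hKδ⟩ := exists_pos_mul_lt (one_half_pos (α := ℝ)) K
  obtain ⟨η₁, hη₁, hle₁⟩ := exists_pos_smul_one_le_Qbar_of_forall_mem_le hg hg0 hgb hw0 hw hw1
    hsupp d measurableSet_Icc (hright δ hδ) hc₀
  obtain ⟨η₂, hη₂, hle₂⟩ := exists_pos_smul_one_le_Qbar_of_forall_mem_le hg hg0 hgb hw0 hw hw1
    hsupp d measurableSet_Icc (hleft δ hδ) hc₀
  refine ⟨min η₁ η₂, lt_min hη₁ hη₂, fun a ha x hx ↦ ?_⟩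
  have haδ : |a| * δ ≤ 1 / 2 := (mul_le_mul_of_nonneg_right ha hδ.le).trans hKδ.le
  rcases forall_add_mul_mem_Icc_or hx haδ with hmem | hmem
  · exact (smul_one_le_smul_one (min_le_left _ _)).trans
      (hle₁ a x fun t ht ↦ hlow _ (hmem t ht))
  · exact (smul_one_le_smul_one (min_le_right _ _)).trans
      (hle₂ a x fun t ht ↦ hlow _ (hmem t ht))

theorem Qbar_eigenvalues_bounded_general {ι : Type*} {g w : ℝ → ℝ} (hg : AEMeasurable g)
    (hg0 : ∀ y, 0 ≤ g y) (hgbdd : ∃ C, ∀ y, g y ≤ C)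
    (hglow : ∃ c₀ > (0 : ℝ), ∀ y ∈ Set.Icc (0 : ℝ) 1, c₀ ≤ g y)
    (hw0 : ∀ t, 0 ≤ w t) (hw : Integrable w) (hw1 : ∫ t, w t = 1)
    (hsupp : Function.support w ⊆ Set.Icc (-1) 1)
    (hright : ∀ δ > (0 : ℝ), 0 < volume {t | t ∈ Set.Icc 0 δ ∧ 0 < w t})
    (hleft : ∀ δ > (0 : ℝ), 0 < volume {t | t ∈ Set.Icc (-δ) 0 ∧ 0 < w t})
    (d : ℕ) {c : ι → ℝ} (hc : BddAbove (Set.range fun i ↦ |c i|)) :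
    ∃ η > (0 : ℝ), ∀ i, ∀ x ∈ Set.Icc (0 : ℝ) 1,
      spectrum ℝ (Qbar g w (c i) d x) ⊆ Set.Icc η (((d : ℝ) + 1) * ⨆ y : ℝ, |g y|) ∧
      IsUnit (Qbar g w (c i) d x) ∧
      opNorm ((Qbar g w (c i) d x)⁻¹) ≤ 1 / η := by
  obtain ⟨c₀, hc₀, hlow⟩ := hglow
  obtain ⟨C, hC⟩ := hgbdd
  obtain ⟨K, hK⟩ := hc
  have hgsup (y : ℝ) : g y ≤ ⨆ y, |g y| :=
    (le_abs_self _).trans <| le_ciSup (f := fun y ↦ |g y|)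
      ⟨C, Set.forall_mem_range.2 fun y ↦ (abs_of_nonneg (hg0 y)).trans_le (hC y)⟩ y
  obtain ⟨η, hη, hle⟩ :=
    exists_pos_smul_one_le_Qbar hg hg0 hgsup hc₀ hlow hw0 hw hw1 hsupp hright hleft d K
  refine ⟨η, hη, fun i x hx ↦ ?_⟩
  have hlower := hle (c i) (hK ⟨i, rfl⟩) x hx
  have hupper := Qbar_le_smul_one hg hg0 hgsup hw0 hw hw1 hsupp (c i) d x
  exact ⟨spectrum_subset_Icc_of_le_of_le (Qbar_isHermitian g w (c i) d x) hlower hupper,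
    (posDef_of_smul_one_le hη hlower).isUnit, opNorm_inv_le_of_smul_one_le hη hlower⟩

end Eigenvalues

/-- display (star3): under Assumptions G and W (with `w` positive on a
set of positive measure near `0`) and `c_n → 0`, there is an `η > 0` such that for all
`n` and all `x ∈ [0,1]` the eigenvalues of `Q̄_n(x)` lie in `[η, (d+1)‖g‖_∞]`; in
particular `Q̄_n(x)` is invertible and `sup_{0≤x≤1} ‖Q̄_n(x)⁻¹‖ ≤ 1/η`. -/
theorem Qbar_eigenvalues_bounded
    (g : ℝ → ℝ)
    -- Assumption G
    (hgdens : ∀ x, 0 ≤ g x) (hgInt : Integrable g) (hgone : ∫ x, g x = 1)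
    (hgbdd : ∃ C, ∀ x, g x ≤ C)
    (hglow : ∃ c₀ > (0 : ℝ), ∀ x ∈ Set.Icc (0 : ℝ) 1, c₀ ≤ g x)
    (hgcont : ContinuousOn g (Set.Icc 0 1))
    -- Assumption W, with positivity near 0
    (w : ℝ → ℝ) (hw0 : ∀ x, 0 ≤ w x) (hwInt : Integrable w) (hwdens : ∫ x, w x = 1)
    (hwsym : ∀ x, w (-x) = w x) (hwsupp : Function.support w ⊆ Set.Icc (-1) 1)
    (hwdiff : Differentiable ℝ w) (hwderiv : ∃ M, ∀ x, |deriv w x| ≤ M)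
    (hwpos : ∀ δ > (0 : ℝ), 0 < volume {t : ℝ | |t| < δ ∧ 0 < w t})
    -- order and bandwidths
    (d : ℕ) (c : ℕ → ℝ) (hcpos : ∀ n, 0 < c n) (hc0 : Tendsto c atTop (nhds 0)) :
    ∃ η > (0 : ℝ), ∀ n : ℕ, ∀ x ∈ Set.Icc (0 : ℝ) 1,
      spectrum ℝ (Qbar g w (c n) d x) ⊆ Set.Icc η (((d : ℝ) + 1) * ⨆ y : ℝ, |g y|) ∧
      IsUnit (Qbar g w (c n) d x) ∧
      opNorm ((Qbar g w (c n) d x)⁻¹) ≤ 1 / η := by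
  have hright (δ : ℝ) (hδ : δ > 0) := volume_right_window_pos hwsym (hwpos δ hδ)
  exact Qbar_eigenvalues_bounded_general hgInt.aemeasurable hgdens hgbdd hglow hw0 hwInt hwdens
    hwsupp hright (fun δ hδ ↦ (volume_left_window_eq hwsym δ).symm ▸ hright δ hδ) d
    hc0.abs.bddAbove_range
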